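/- (Lehmer) Let C(M) = |{(m,n) ∈ ℕ×ℕ : gcd(m,n) = 1, m > n ≥ 1, m² + n² ≤ M, m − n odd}|, the number of primitive Pythagorean triples with hypotenuse at most M. Let z : ℕ_{≥1} → ℕ be the nondecreasing enumeration with multiplicity of the hypotenuses of primitive Pythagorean triples, i.e. z is monotone nondecreasing and |{N ≥ 1 : z(N) ≤ M}| = C(M) for every M. Then lim_{N→∞} z(N)/N = 2π. -/

import Mathlib

/-!
The sector `0 < n < m`, `m² + n² ≤ M` contains `π M / 8 + o(M)` lattice points, and those with both
coordinates divisible by `d` are the `d`-multiples of the lattice points of the sector for `M / d²`.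
So by Möbius inversion the coprime ones have density `(π / 8) ∑ μ(d) / d² = 3 / (4π)`. Those of odd
difference are counted by `C(M)`, while `(m, n) ↦ (m + n, m - n)`, a reflection scaled by `√2`,
carries the pairs counted by `C(M / 2)` bijectively onto the coprime pairs of even difference.
Solving `C(M) + C(M / 2) ~ 3 M / (4π)` recursively gives
`C(M) / M → (3 / (4π)) / (1 + 1 / 2) = 1 / (2π)`. Since `z` is a generalized inverse of `C`, the
quotient `z(N) / N` tends to the reciprocal.
-/

open Filter

/-- `C M` = the number of primitive Pythagorean triples with hypotenuse at most `M`,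
counted as `|{(m,n) : gcd(m,n)=1, m > n ≥ 1, m² + n² ≤ M, m - n odd}|`. -/
noncomputable def pptCount (M : ℕ) : ℕ :=
  {p : ℕ × ℕ | Nat.gcd p.1 p.2 = 1 ∧ 1 ≤ p.2 ∧ p.2 < p.1 ∧
      p.1 ^ 2 + p.2 ^ 2 ≤ M ∧ Odd (p.1 - p.2)}.ncard

section Asymptotics

open scoped Topology

lemma exists_abs_le_mul_of_tendsto_div {f : ℕ → ℝ} {a : ℝ} (hf₀ : f 0 = 0)
    (hf : Tendsto (fun n : ℕ => f n / n) atTop (𝓝 a)) : ∃ B, ∀ n : ℕ, |f n| ≤ B * n := by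
  obtain ⟨B, hB⟩ := hf.abs.bddAbove_range
  refine ⟨B, fun n => ?_⟩
  rcases n.eq_zero_or_pos with rfl | hn
  · simp [hf₀]
  · have h : |f n / n| ≤ B := hB ⟨n, rfl⟩
    rwa [abs_div, Nat.abs_cast, div_le_iff₀ (by positivity)] at h

lemma tendsto_comp_div_div {f : ℕ → ℝ} {a : ℝ} (hf₀ : f 0 = 0)
    (hf : Tendsto (fun n : ℕ => f n / n) atTop (𝓝 a)) (q : ℕ) :
    Tendsto (fun n : ℕ => f (n / q) / n) atTop (𝓝 (a / q)) := by
  rcases q.eq_zero_or_pos with rfl | hq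
  · simp [hf₀]
  have hdiv : Tendsto (fun n : ℕ => n / q) atTop atTop := Nat.tendsto_div_const_atTop hq.ne'
  have hfloor : Tendsto (fun n : ℕ => ((n / q : ℕ) : ℝ) / n) atTop (𝓝 (q : ℝ)⁻¹) := by
    have h := (tendsto_nat_floor_mul_div_atTop (inv_nonneg.2 (Nat.cast_nonneg (α := ℝ) q))).comp
      tendsto_natCast_atTop_atTop
    refine h.congr fun n => ?_
    simp only [Function.comp_apply, inv_mul_eq_div, Nat.floor_div_natCast, Nat.floor_natCast]
  refine ((hf.comp hdiv).mul hfloor).congr' ?_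
  filter_upwards [hdiv.eventually_ge_atTop 1] with n hn
  have : ((n / q : ℕ) : ℝ) ≠ 0 := by positivity
  simp only [Function.comp_apply]
  field_simp

lemma tendsto_tsum_mul_comp_div_div {ι : Type*} {w : ι → ℝ} {q : ι → ℕ}
    (hw : Summable fun i => w i / q i) {f : ℕ → ℝ} {a : ℝ} (hf₀ : f 0 = 0)
    (hf : Tendsto (fun n : ℕ => f n / n) atTop (𝓝 a)) :
    Tendsto (fun n : ℕ => (∑' i, w i * f (n / q i)) / n) atTop (𝓝 (a * ∑' i, w i / q i)) := by
  obtain ⟨B, hB⟩ := exists_abs_le_mul_of_tendsto_div hf₀ hf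
  have hB₀ : 0 ≤ B := by simpa using (abs_nonneg _).trans (hB 1)
  have hbound (n : ℕ) (i : ι) : ‖w i * f (n / q i) / n‖ ≤ B * |w i / q i| := by
    rcases n.eq_zero_or_pos with rfl | hn
    · simpa using mul_nonneg hB₀ (abs_nonneg _)
    have h : |f (n / q i)| / n ≤ B / q i := by
      rw [div_le_iff₀ (by positivity), div_mul_eq_mul_div, mul_div_assoc]
      exact (hB _).trans (by gcongr; exact Nat.cast_div_le)
    calc ‖w i * f (n / q i) / n‖ = |w i| * (|f (n / q i)| / n) := by
          rw [Real.norm_eq_abs, abs_div, abs_mul, Nat.abs_cast, mul_div_assoc]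
      _ ≤ |w i| * (B / q i) := by gcongr
      _ = B * |w i / q i| := by rw [abs_div, Nat.abs_cast]; ring
  simp only [← tsum_div_const, ← tsum_mul_left]
  refine tendsto_tsum_of_dominated_convergence (hw.abs.mul_left B) (fun i => ?_)
    (Eventually.of_forall hbound)
  convert! (tendsto_comp_div_div hf₀ hf (q i)).const_mul (w i) using 2 <;> ring

lemma eq_sum_range_add_of_eq_add_mul_comp_div {R : Type*} [CommSemiring R] {f g : ℕ → R}
    {c : R} {q : ℕ} (h : ∀ n, f n = g n + c * f (n / q)) (n k : ℕ) :
    f n = ∑ i ∈ Finset.range k, c ^ i * g (n / q ^ i) + c ^ k * f (n / q ^ k) := by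
  induction k with
  | zero => simp
  | succ k ih =>
    rw [ih, h (n / q ^ k), Nat.div_div_eq_div_mul, ← pow_succ, Finset.sum_range_succ]
    ring

lemma tendsto_div_of_eq_add_mul_comp_div {f g : ℕ → ℝ} {a c : ℝ} {q : ℕ} (hq : 1 < q)
    (hc : |c| < q) (hf₀ : f 0 = 0) (h : ∀ n, f n = g n + c * f (n / q))
    (hg : Tendsto (fun n : ℕ => g n / n) atTop (𝓝 a)) :
    Tendsto (fun n : ℕ => f n / n) atTop (𝓝 (a / (1 - c / q))) := by
  have hg₀ : g 0 = 0 := by simpa [hf₀] using (h 0).symm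
  have hf (n : ℕ) : f n = ∑' i, c ^ i * g (n / q ^ i) := by
    have hdiv {i : ℕ} (hi : n ≤ i) : n / q ^ i = 0 :=
      Nat.div_eq_of_lt (hi.trans_lt (Nat.lt_pow_self hq))
    rw [eq_sum_range_add_of_eq_add_mul_comp_div h n n, hdiv le_rfl, hf₀, mul_zero, add_zero,
      tsum_eq_sum fun i hi => ?_]
    rw [hdiv (not_lt.1 (Finset.mem_range.not.1 hi)), hg₀, mul_zero]
  have hratio : |c / q| < 1 := by
    rwa [abs_div, Nat.abs_cast, div_lt_one (by positivity)]
  have hpow : (fun i : ℕ => c ^ i / ((q ^ i : ℕ) : ℝ)) = fun i => (c / q) ^ i := by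
    ext i; rw [Nat.cast_pow, div_pow]
  have hlim := tendsto_tsum_mul_comp_div_div (w := fun i : ℕ => c ^ i) (q := fun i => q ^ i)
    (hpow ▸ summable_geometric_of_abs_lt_one hratio) hg₀ hg
  rw [hpow, tsum_geometric_of_abs_lt_one hratio, ← div_eq_mul_inv] at hlim
  exact hlim.congr fun n => by rw [hf]

end Asymptotics

section Enumeration

open scoped Topology

variable {z : ℕ → ℕ}

lemma le_ncard_setOf_le (hz : MonotoneOn z (Set.Ici 1)) {N : ℕ}
    (hfin : {K | 1 ≤ K ∧ z K ≤ z N}.Finite) : N ≤ {K | 1 ≤ K ∧ z K ≤ z N}.ncard := by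
  have hsub : Set.Icc 1 N ⊆ {K | 1 ≤ K ∧ z K ≤ z N} := fun K hK =>
    ⟨hK.1, hz hK.1 (hK.1.trans hK.2) hK.2⟩
  simpa [Set.ncard_eq_toFinset_card'] using Set.ncard_le_ncard hsub hfin

lemma ncard_setOf_le_le (hz : MonotoneOn z (Set.Ici 1)) {M N : ℕ} (hN : 1 ≤ N) (hM : M < z N) :
    {K | 1 ≤ K ∧ z K ≤ M}.ncard ≤ N := by
  have hsub : {K | 1 ≤ K ∧ z K ≤ M} ⊆ Set.Icc 1 N := fun K hK =>
    ⟨hK.1, le_of_not_gt fun h => (hM.trans_le (hz hN hK.1 h.le)).not_ge hK.2⟩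
  simpa [Set.ncard_eq_toFinset_card'] using Set.ncard_le_ncard hsub

lemma finite_setOf_le_of_tendsto {c : ℝ} (hc : c ≠ 0)
    (h : Tendsto (fun M : ℕ => ({K | 1 ≤ K ∧ z K ≤ M}.ncard : ℝ) / M) atTop (𝓝 c)) (M : ℕ) :
    {K | 1 ≤ K ∧ z K ≤ M}.Finite := by
  obtain ⟨M', hne, hle⟩ := ((h.eventually_ne hc).and (eventually_ge_atTop M)).exists
  have hfin : {K | 1 ≤ K ∧ z K ≤ M'}.Finite :=
    Set.finite_of_ncard_ne_zero fun h₀ => hne (by simp [h₀])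
  exact hfin.subset fun K hK => ⟨hK.1, hK.2.trans hle⟩

lemma tendsto_atTop_of_finite_setOf_le (hfin : ∀ M : ℕ, {K | 1 ≤ K ∧ z K ≤ M}.Finite) :
    Tendsto z atTop atTop := by
  refine tendsto_atTop.2 fun M => ?_
  filter_upwards [Nat.cofinite_eq_atTop ▸ (hfin M).compl_mem_cofinite, eventually_ge_atTop 1]
    with N hN h₁
  exact (not_le.1 fun hle => hN ⟨h₁, hle⟩).le

lemma tendsto_comp_pred_div {f : ℕ → ℝ} {c : ℝ}
    (h : Tendsto (fun n : ℕ => f n / n) atTop (𝓝 c)) :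
    Tendsto (fun n : ℕ => f (n - 1) / n) atTop (𝓝 c) := by
  rw [← tendsto_add_atTop_iff_nat 1]
  have hmul := h.mul (tendsto_natCast_div_add_atTop (1 : ℝ))
  rw [mul_one] at hmul
  refine hmul.congr' ?_
  filter_upwards [eventually_ne_atTop 0] with n hn
  rw [Nat.add_sub_cancel, Nat.cast_succ, div_mul_div_cancel₀ (Nat.cast_ne_zero.2 hn)]

lemma tendsto_div_of_tendsto_ncard_setOf_le_div (hz : MonotoneOn z (Set.Ici 1)) {c : ℝ}
    (hc : c ≠ 0)
    (h : Tendsto (fun M : ℕ => ({K | 1 ≤ K ∧ z K ≤ M}.ncard : ℝ) / M) atTop (𝓝 c)) :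
    Tendsto (fun N : ℕ => (z N : ℝ) / N) atTop (𝓝 c⁻¹) := by
  have hfin := finite_setOf_le_of_tendsto hc h
  have hz_top := tendsto_atTop_of_finite_setOf_le hfin
  have hinv : Tendsto (fun N : ℕ => (N : ℝ) / z N) atTop (𝓝 c) := by
    refine tendsto_of_tendsto_of_tendsto_of_le_of_le' ((tendsto_comp_pred_div h).comp hz_top)
      (h.comp hz_top) ?_ ?_
    · filter_upwards [eventually_ge_atTop 1, hz_top.eventually_gt_atTop 0] with N hN hzN
      rw [Function.comp_apply]
      gcongr
      exact ncard_setOf_le_le hz hN (Nat.sub_lt hzN one_pos)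
    · filter_upwards with N
      rw [Function.comp_apply]
      gcongr
      exact le_ncard_setOf_le hz (hfin _)
  simpa only [inv_div] using hinv.inv₀ hc

end Enumeration

section Moebius

open scoped Finset ArithmeticFunction.Moebius

lemma hasSum_ite_dvd_moebius {n : ℕ} (hn : n ≠ 0) :
    HasSum (fun d : ℕ => if d ∣ n then (μ d : ℝ) else 0) (if n = 1 then 1 else 0) := by
  have h : ∑ d ∈ n.divisors, (μ d : ℝ) = if n = 1 then 1 else 0 := by
    have h := congrArg (fun f => f n) (ArithmeticFunction.coe_moebius_mul_coe_zeta (R := ℝ))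
    simpa only [ArithmeticFunction.coe_mul_zeta_apply, ArithmeticFunction.intCoe_apply,
      ArithmeticFunction.one_apply] using h
  rw [← h, ← Finset.sum_congr rfl fun d hd => if_pos (Nat.dvd_of_mem_divisors hd)]
  exact hasSum_sum_of_ne_finset_zero fun d hd => if_neg fun hdvd => hd (by simp [hdvd, hn])

lemma hasSum_moebius_mul_card_dvd {α : Type*} (s : Finset α) {g : α → ℕ}
    (hg : ∀ x ∈ s, g x ≠ 0) :
    HasSum (fun d : ℕ => (μ d : ℝ) * #{x ∈ s | d ∣ g x}) #{x ∈ s | g x = 1} := by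
  convert! hasSum_sum fun x hx => hasSum_ite_dvd_moebius (hg x hx) using 1
  · ext d
    rw [← Finset.sum_filter, Finset.sum_const, nsmul_eq_mul, mul_comm]
  · rw [Finset.sum_boole]

lemma tsum_moebius_div_pow {k : ℕ} (hk : 1 < k) :
    ∑' d : ℕ, (μ d : ℂ) / (d : ℂ) ^ k = (riemannZeta k)⁻¹ := by
  have hre : 1 < ((k : ℂ)).re := by simpa using hk
  have hmul := LSeries_one_mul_Lseries_moebius hre
  rw [LSeries_one_eq_riemannZeta hre] at hmul
  rw [← eq_inv_of_mul_eq_one_right hmul, LSeries]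
  refine tsum_congr fun d => ?_
  rcases eq_or_ne d 0 with rfl | hd
  · simp
  · rw [LSeries.term_of_ne_zero hd, Complex.cpow_natCast]

lemma tsum_moebius_div_sq : ∑' d : ℕ, (μ d : ℝ) / (d : ℝ) ^ 2 = 6 / Real.pi ^ 2 := by
  have h := tsum_moebius_div_pow one_lt_two
  rw [Nat.cast_ofNat, riemannZeta_two, inv_div] at h
  apply Complex.ofReal_injective
  push_cast
  exact h

lemma summable_moebius_div_pow {k : ℕ} (hk : 1 < k) :
    Summable fun d : ℕ => (μ d : ℝ) / (d : ℝ) ^ k := by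
  refine (Real.summable_one_div_nat_pow.2 hk).of_norm_bounded fun d => ?_
  have hμ : |(μ d : ℝ)| ≤ 1 := mod_cast ArithmeticFunction.abs_moebius_le_one (n := d)
  rw [norm_div, norm_pow, Real.norm_eq_abs, Real.norm_natCast]
  gcongr

end Moebius

section Octant

open MeasureTheory Real
open scoped Topology Finset ArithmeticFunction.Moebius

lemma sin_pos_and_sin_lt_cos_iff {θ : ℝ} (h₁ : -π < θ) (h₂ : θ < π) :
    0 < sin θ ∧ sin θ < cos θ ↔ 0 < θ ∧ θ < π / 4 := by
  have _ := pi_pos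
  have sin_lt_cos_iff (h₀ : 0 < θ) (h : θ < π / 2) : sin θ < cos θ ↔ θ < π / 4 := by
    rw [← sin_pi_div_two_sub,
      strictMonoOn_sin.lt_iff_lt ⟨by linarith, h.le⟩ ⟨by linarith, by linarith⟩]
    constructor <;> intro <;> linarith
  constructor
  · rintro ⟨hsin, hlt⟩
    have h₀ : 0 < θ := by
      contrapose! hsin
      exact sin_nonpos_of_nonpos_of_neg_pi_le hsin h₁.le
    have h : θ < π / 2 := by
      by_contra! h
      exact (hsin.trans hlt).not_ge (cos_nonpos_of_pi_div_two_le_of_le h (by linarith))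
    exact ⟨h₀, (sin_lt_cos_iff h₀ h).1 hlt⟩
  · rintro ⟨h₀, h⟩
    exact ⟨sin_pos_of_pos_of_lt_pi h₀ h₂, (sin_lt_cos_iff h₀ (by linarith)).2 h⟩

lemma volume_image_polarCoord_symm {s : Set (ℝ × ℝ)} (hs : MeasurableSet s)
    (hst : s ⊆ polarCoord.target) :
    volume (polarCoord.symm '' s) = ∫⁻ p in s, ENNReal.ofReal p.1 := by
  rw [← lintegral_abs_det_fderiv_eq_addHaar_image volume hs
    (fun p _ => (hasFDerivAt_polarCoord_symm p).hasFDerivWithinAt)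
    (polarCoord.symm.injOn.mono hst)]
  refine setLIntegral_congr_fun hs fun p hp => ?_
  have hp₀ : 0 < p.1 := (hst hp).1
  simp only [det_fderivPolarCoordSymm, abs_of_pos hp₀]

lemma volume_polarSector {R α β : ℝ} (hR : 0 ≤ R) (hα : -π ≤ α) (hβ : β ≤ π) :
    volume (polarCoord.symm '' (Set.Ioc 0 R ×ˢ Set.Ioo α β)) =
      ENNReal.ofReal (R ^ 2 / 2) * ENNReal.ofReal (β - α) := by
  rw [volume_image_polarCoord_symm (measurableSet_Ioc.prod measurableSet_Ioo)
      (Set.prod_mono Set.Ioc_subset_Ioi_self (Set.Ioo_subset_Ioo hα hβ)),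
    Measure.volume_eq_prod, ← Measure.prod_restrict,
    lintegral_prod _ (by fun_prop)]
  simp only [lintegral_const, Measure.restrict_apply_univ, Real.volume_Ioo]
  rw [lintegral_mul_const _ (by fun_prop)]
  congr 1
  rw [← ofReal_integral_eq_lintegral_ofReal, ← intervalIntegral.integral_of_le hR]
  · simp
  · exact (continuous_id.integrableOn_Icc).mono_set Set.Ioc_subset_Icc_self
  · exact ae_restrict_of_forall_mem measurableSet_Ioc fun r hr => hr.1.le

/-- The open cone `0 < y < x` in the plane, which contains the pairs parametrizing Pythagorean
triples. The plane is `Fin 2 → ℝ`, where the lattice of integer points is spanned by the standard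
basis. -/
def openOctant : Set (Fin 2 → ℝ) := {v | 0 < v 1 ∧ v 1 < v 0}

/-- The part of `openOctant` in the closed Euclidean unit disc, an eighth of the disc. -/
def octantSector : Set (Fin 2 → ℝ) := {v ∈ openOctant | v 0 ^ 2 + v 1 ^ 2 ≤ 1}

lemma mul_cos_mul_sin_mem_octantSector_iff {r θ : ℝ} (hr : 0 < r) (h₁ : -π < θ) (h₂ : θ < π) :
    ![r * cos θ, r * sin θ] ∈ octantSector ↔
      (r, θ) ∈ Set.Ioc (0 : ℝ) 1 ×ˢ Set.Ioo 0 (π / 4) := by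
  have hnorm : (r * cos θ) ^ 2 + (r * sin θ) ^ 2 = r ^ 2 := by
    linear_combination r ^ 2 * sin_sq_add_cos_sq θ
  change (0 < r * sin θ ∧ r * sin θ < r * cos θ) ∧ (r * cos θ) ^ 2 + (r * sin θ) ^ 2 ≤ 1 ↔ _
  rw [hnorm, sq_le_one_iff₀ hr.le, mul_pos_iff_of_pos_left hr, mul_lt_mul_iff_right₀ hr,
    sin_pos_and_sin_lt_cos_iff h₁ h₂]
  simp [hr, and_comm]

lemma preimage_finTwoArrow_polarSector :
    MeasurableEquiv.finTwoArrow ⁻¹'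
      (polarCoord.symm '' (Set.Ioc 0 1 ×ˢ Set.Ioo 0 (π / 4))) = octantSector := by
  ext v
  have hvec : ![v 0, v 1] = v := by ext i; fin_cases i <;> rfl
  constructor
  · rintro ⟨⟨r, θ⟩, ⟨hr, hθ⟩, hv⟩
    have h0 : r * cos θ = v 0 := congrArg Prod.fst hv
    have h1 : r * sin θ = v 1 := congrArg Prod.snd hv
    have hmem := (mul_cos_mul_sin_mem_octantSector_iff hr.1 (by linarith [hθ.1, pi_pos])
      (by linarith [hθ.2, pi_pos])).2 ⟨hr, hθ⟩
    rwa [h0, h1, hvec] at hmem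
  · intro hv
    have hsource : (v 0, v 1) ∈ polarCoord.source := Or.inl (hv.1.1.trans hv.1.2)
    obtain ⟨hr, hθ⟩ := polarCoord.map_source hsource
    have hinv := polarCoord.left_inv hsource
    set p := polarCoord (v 0, v 1)
    have h0 : p.1 * cos p.2 = v 0 := congrArg Prod.fst hinv
    have h1 : p.1 * sin p.2 = v 1 := congrArg Prod.snd hinv
    refine ⟨p, (mul_cos_mul_sin_mem_octantSector_iff hr hθ.1 hθ.2).1 ?_, hinv⟩
    rwa [h0, h1, hvec]

lemma measurableSet_octantSector : MeasurableSet octantSector := by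
  unfold octantSector openOctant
  measurability

lemma convex_octantSector : Convex ℝ octantSector := by
  let coord (i : Fin 2) : (Fin 2 → ℝ) →ₗ[ℝ] ℝ := LinearMap.proj i
  have convexOn_sq (i : Fin 2) : ConvexOn ℝ Set.univ fun v : Fin 2 → ℝ => v i ^ 2 :=
    (even_two.convexOn_pow (𝕜 := ℝ)).comp_linearMap (coord i)
  have hpos : Convex ℝ {v : Fin 2 → ℝ | 0 < v 1} := convex_halfSpace_gt (coord 1).isLinear 0
  have hlt : Convex ℝ {v : Fin 2 → ℝ | v 1 < v 0} := by
    simpa [coord] using convex_halfSpace_lt (coord 1 - coord 0).isLinear 0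
  have hle : Convex ℝ {v : Fin 2 → ℝ | v 0 ^ 2 + v 1 ^ 2 ≤ 1} := by
    simpa using ((convexOn_sq 0).add (convexOn_sq 1)).convex_le 1
  exact (hpos.inter hlt).inter hle

lemma isBounded_octantSector : Bornology.IsBounded octantSector := by
  refine Metric.isBounded_closedBall.subset (t := Metric.closedBall 0 1) fun v hv => ?_
  rw [mem_closedBall_zero_iff, pi_norm_le_iff_of_nonneg zero_le_one, Fin.forall_fin_two]
  simp only [Real.norm_eq_abs, ← sq_le_one_iff_abs_le_one]
  constructor <;> nlinarith [hv.2]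

lemma volume_octantSector : volume.real octantSector = π / 8 := by
  rw [Measure.real, ← preimage_finTwoArrow_polarSector,
    (volume_preserving_finTwoArrow ℝ).measure_preimage_equiv,
    volume_polarSector zero_le_one (by linarith [pi_pos]) (by linarith [pi_pos]),
    ← ENNReal.ofReal_mul (by positivity), sub_zero, ENNReal.toReal_ofReal (by positivity)]
  ring

lemma covolume_span_basisFun (ι : Type*) [Fintype ι] :
    ZLattice.covolume (Submodule.span ℤ (Set.range (Pi.basisFun ℝ ι))) = 1 := by
  rw [ZLattice.covolume_eq_measure_fundamentalDomain _ _ (ZSpan.isAddFundamentalDomain _ volume)]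
  simp [ZSpan.fundamentalDomain_pi_basisFun, Measure.real, Real.volume_pi_Ico]

/-- The integer points of the sector `0 < n < m`, `m² + n² ≤ M`. The bounds `m, n ≤ M`, which follow
from the last inequality, serve to exhibit the set as a `Finset`. -/
def octantPairs (M : ℕ) : Finset (ℕ × ℕ) :=
  {p ∈ Finset.Icc 1 M ×ˢ Finset.Icc 1 M | p.2 < p.1 ∧ p.1 ^ 2 + p.2 ^ 2 ≤ M}

lemma mem_octantPairs {M : ℕ} {p : ℕ × ℕ} :
    p ∈ octantPairs M ↔ 0 < p.2 ∧ p.2 < p.1 ∧ p.1 ^ 2 + p.2 ^ 2 ≤ M := by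
  simp only [octantPairs, Finset.mem_filter, Finset.mem_product, Finset.mem_Icc]
  refine ⟨fun h => ⟨h.1.2.1, h.2⟩, fun ⟨h₀, hlt, hle⟩ => ⟨⟨⟨?_, ?_⟩, h₀, ?_⟩, hlt, hle⟩⟩ <;>
    nlinarith

lemma octantPairs_zero : octantPairs 0 = ∅ := rfl

lemma gcd_ne_zero_of_mem_octantPairs {M : ℕ} {p : ℕ × ℕ} (hp : p ∈ octantPairs M) :
    p.1.gcd p.2 ≠ 0 :=
  (Nat.gcd_pos_of_pos_right _ (mem_octantPairs.1 hp).1).ne'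

lemma smul_mem_octantPairs {M d : ℕ} (hd : 0 < d) {p : ℕ × ℕ} :
    d • p ∈ octantPairs M ↔ p ∈ octantPairs (M / d ^ 2) := by
  have hsq : (d * p.1) ^ 2 + (d * p.2) ^ 2 = (p.1 ^ 2 + p.2 ^ 2) * d ^ 2 := by ring
  simp only [mem_octantPairs, Prod.smul_fst, Prod.smul_snd, smul_eq_mul, hsq,
    Nat.le_div_iff_mul_le (pow_pos hd 2), mul_pos_iff_of_pos_left hd, mul_lt_mul_iff_right₀ hd]

lemma card_octantPairs_dvd_gcd (M d : ℕ) :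
    #{p ∈ octantPairs M | d ∣ p.1.gcd p.2} = #(octantPairs (M / d ^ 2)) := by
  rcases d.eq_zero_or_pos with rfl | hd
  -- Both sides vanish, the right-hand one because `M / 0 = 0`.
  · have hempty : ∀ p ∈ octantPairs M, ¬ 0 ∣ p.1.gcd p.2 := fun p hp hdvd =>
      gcd_ne_zero_of_mem_octantPairs hp (zero_dvd_iff.1 hdvd)
    rw [Finset.filter_false_of_mem hempty]
    simp [octantPairs_zero]
  rw [← Finset.card_image_of_injective (octantPairs (M / d ^ 2))
    (smul_right_injective (ℕ × ℕ) hd.ne')]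
  congr 1
  ext p
  simp only [Finset.mem_filter, Finset.mem_image, Nat.dvd_gcd_iff]
  constructor
  · rintro ⟨hp, ⟨m, hm⟩, ⟨n, hn⟩⟩
    obtain rfl : p = d • (m, n) := Prod.ext hm hn
    exact ⟨(m, n), (smul_mem_octantPairs hd).1 hp, rfl⟩
  · rintro ⟨p, hp, rfl⟩
    exact ⟨(smul_mem_octantPairs hd).2 hp, dvd_mul_right _ _, dvd_mul_right _ _⟩

lemma natCard_octant_inter_lattice (M : ℕ) :
    Nat.card ({v ∈ openOctant | v 0 ^ 2 + v 1 ^ 2 ≤ M} ∩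
      Submodule.span ℤ (Set.range (Pi.basisFun ℝ (Fin 2))) : Set (Fin 2 → ℝ)) =
      #(octantPairs M) := by
  have hinj : Function.Injective fun p : ℕ × ℕ => (![p.1, p.2] : Fin 2 → ℝ) := fun p p' h =>
    Prod.ext (Nat.cast_injective (congrFun h 0)) (Nat.cast_injective (congrFun h 1))
  rw [Nat.card_coe_set_eq, ← Set.ncard_coe_finset, ← Set.ncard_image_of_injective _ hinj]
  congr 1
  ext v
  simp only [Set.mem_inter_iff, SetLike.mem_coe, Module.Basis.mem_span_iff_repr_mem,
    Pi.basisFun_repr, Fin.forall_fin_two, Set.mem_image, mem_octantPairs]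
  constructor
  · rintro ⟨⟨⟨hpos, hlt⟩, hle⟩, ⟨m, hm⟩, ⟨n, hn⟩⟩
    simp only [algebraMap_int_eq, eq_intCast] at hm hn
    rw [← hn] at hpos
    rw [← hm, ← hn] at hlt hle
    lift n to ℕ using by exact_mod_cast hpos.le
    lift m to ℕ using by exact_mod_cast hpos.le.trans hlt.le
    refine ⟨(m, n), ⟨mod_cast hpos, mod_cast hlt, mod_cast hle⟩, ?_⟩
    ext i
    fin_cases i
    exacts [hm, hn]
  · rintro ⟨⟨m, n⟩, ⟨hpos, hlt, hle⟩, rfl⟩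
    have hle' : (m : ℝ) ^ 2 + (n : ℝ) ^ 2 ≤ M := mod_cast hle
    exact ⟨⟨⟨Nat.cast_pos.2 hpos, Nat.cast_lt.2 hlt⟩, hle'⟩, ⟨m, by simp⟩, ⟨n, by simp⟩⟩

lemma tendsto_card_octantPairs_div :
    Tendsto (fun M : ℕ => (#(octantPairs M) : ℝ) / M) atTop (𝓝 (π / 8)) := by
  have hcone (v : Fin 2 → ℝ) (r : ℝ) (hv : v ∈ openOctant) (hr : 0 < r) : r • v ∈ openOctant :=
    ⟨mul_pos hr hv.1, mul_lt_mul_of_pos_left hv.2 hr⟩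
  have hhom (v : Fin 2 → ℝ) (r : ℝ) (_ : 0 ≤ r) :
      (r • v) 0 ^ 2 + (r • v) 1 ^ 2 = r ^ Fintype.card (Fin 2) * (v 0 ^ 2 + v 1 ^ 2) := by
    simp only [Pi.smul_apply, smul_eq_mul, Fintype.card_fin]
    ring
  have h := ZLattice.covolume.tendsto_card_le_div
    (Submodule.span ℤ (Set.range (Pi.basisFun ℝ (Fin 2)))) (F := fun v => v 0 ^ 2 + v 1 ^ 2)
    hcone hhom isBounded_octantSector measurableSet_octantSector
    (convex_octantSector.addHaar_frontier _)
  rw [covolume_span_basisFun, div_one] at h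
  refine (volume_octantSector ▸ h.comp tendsto_natCast_atTop_atTop).congr fun M => ?_
  rw [Function.comp_apply, natCard_octant_inter_lattice]

lemma card_coprime_octantPairs_eq_tsum (M : ℕ) :
    (#{p ∈ octantPairs M | p.1.Coprime p.2} : ℝ) =
      ∑' d : ℕ, (μ d : ℝ) * #(octantPairs (M / d ^ 2)) := by
  have h := hasSum_moebius_mul_card_dvd (octantPairs M) (g := fun p => p.1.gcd p.2)
    fun p => gcd_ne_zero_of_mem_octantPairs
  simp only [card_octantPairs_dvd_gcd] at h
  exact h.tsum_eq.symm

lemma tendsto_card_coprime_octantPairs_div :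
    Tendsto (fun M : ℕ => (#{p ∈ octantPairs M | p.1.Coprime p.2} : ℝ) / M) atTop
      (𝓝 (3 / (4 * π))) := by
  have hsum := summable_moebius_div_pow one_lt_two
  have h := tendsto_tsum_mul_comp_div_div (w := fun d : ℕ => (μ d : ℝ)) (q := fun d => d ^ 2)
    (by simpa using hsum) (by simp [octantPairs_zero]) tendsto_card_octantPairs_div
  have hlim : π / 8 * (6 / π ^ 2) = 3 / (4 * π) := by field_simp; norm_num
  simp only [Nat.cast_pow, tsum_moebius_div_sq, hlim] at h
  simpa only [card_coprime_octantPairs_eq_tsum] using h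

lemma add_sub_mem_octantPairs {M m n : ℕ} (h : n ≤ m) :
    (m + n, m - n) ∈ octantPairs M ↔ (m, n) ∈ octantPairs (M / 2) := by
  obtain ⟨k, rfl⟩ := Nat.exists_eq_add_of_le h
  have hsq : (n + k + n) ^ 2 + k ^ 2 = ((n + k) ^ 2 + n ^ 2) * 2 := by ring
  simp only [mem_octantPairs, Nat.add_sub_cancel_left, Nat.le_div_iff_mul_le two_pos, hsq]
  omega

lemma coprime_add_sub_iff {m n : ℕ} (h : n ≤ m) :
    (m + n).Coprime (m - n) ↔ m.Coprime n ∧ Odd (m - n) := by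
  obtain ⟨k, rfl⟩ := Nat.exists_eq_add_of_le' h
  have hadd : k + n + n = 2 * n + k := by ring
  rw [Nat.add_sub_cancel_right, hadd, Nat.coprime_add_self_left, Nat.coprime_mul_iff_left,
    Nat.coprime_two_left, Nat.coprime_add_self_left, Nat.coprime_comm (m := n), and_comm]

lemma pptCount_eq_card (M : ℕ) :
    pptCount M = #{p ∈ octantPairs M | p.1.Coprime p.2 ∧ Odd (p.1 - p.2)} := by
  rw [pptCount, ← Set.ncard_coe_finset]
  congr 1
  ext p
  simp only [Finset.coe_filter, mem_octantPairs, Set.mem_ofPred_eq, Nat.Coprime]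
  tauto

lemma card_coprime_not_odd_sub (M : ℕ) :
    #{p ∈ octantPairs M | p.1.Coprime p.2 ∧ ¬ Odd (p.1 - p.2)} = pptCount (M / 2) := by
  have hinj : Set.InjOn (fun p : ℕ × ℕ => (p.1 + p.2, p.1 - p.2))
      ↑{p ∈ octantPairs (M / 2) | p.1.Coprime p.2 ∧ Odd (p.1 - p.2)} := by
    rintro ⟨m, n⟩ hp ⟨m', n'⟩ hp' heq
    have hlt := (mem_octantPairs.1 (Finset.mem_filter.1 hp).1).2.1
    have hlt' := (mem_octantPairs.1 (Finset.mem_filter.1 hp').1).2.1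
    simp only [Prod.mk.injEq] at heq hlt hlt' ⊢
    omega
  rw [pptCount_eq_card, ← Finset.card_image_of_injOn hinj]
  congr 1
  ext ⟨a, b⟩
  simp only [Finset.mem_filter, Finset.mem_image, Nat.not_odd_iff_even, Prod.exists,
    Prod.mk.injEq]
  constructor
  · rintro ⟨hp, hcop, n, hn⟩
    have hlt := (mem_octantPairs.1 hp).2.1
    obtain rfl : a = b + n + n := by dsimp only at hlt; omega
    have hle : n ≤ b + n := Nat.le_add_left n b
    have hsub : b + n - n = b := Nat.add_sub_cancel b n
    exact ⟨b + n, n, ⟨(add_sub_mem_octantPairs hle).1 (by rwa [hsub]),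
      (coprime_add_sub_iff hle).1 (by rwa [hsub])⟩, rfl, hsub⟩
  · rintro ⟨m, n, ⟨hp, hcop⟩, rfl, rfl⟩
    have hle := (mem_octantPairs.1 hp).2.1.le
    refine ⟨(add_sub_mem_octantPairs hle).2 hp, (coprime_add_sub_iff hle).2 hcop, n, ?_⟩
    dsimp only at hle
    omega

lemma pptCount_add_pptCount_half (M : ℕ) :
    pptCount M + pptCount (M / 2) = #{p ∈ octantPairs M | p.1.Coprime p.2} := by
  rw [← card_coprime_not_odd_sub, pptCount_eq_card,
    ← Finset.card_filter_add_card_filter_not (s := {p ∈ octantPairs M | p.1.Coprime p.2})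
      (fun p => Odd (p.1 - p.2)), Finset.filter_filter, Finset.filter_filter]

lemma tendsto_pptCount_div :
    Tendsto (fun M : ℕ => (pptCount M : ℝ) / M) atTop (𝓝 (2 * π)⁻¹) := by
  have hrec (M : ℕ) : (pptCount M : ℝ) =
      #{p ∈ octantPairs M | p.1.Coprime p.2} + -1 * (pptCount (M / 2) : ℝ) := by
    rw [← pptCount_add_pptCount_half, Nat.cast_add]
    ring
  have hzero : (pptCount 0 : ℝ) = 0 := by simp [pptCount_eq_card, octantPairs_zero]
  have h := tendsto_div_of_eq_add_mul_comp_div (c := -1) one_lt_two (by norm_num) hzero hrec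
    tendsto_card_coprime_octantPairs_div
  have hlim : 3 / (4 * π) / (1 - -1 / (2 : ℕ)) = (2 * π)⁻¹ := by
    field_simp
    norm_num
  rwa [hlim] at h

end Octant

/-- **Lehmer's theorem.**  If `z : ℕ_{≥1} → ℕ` is the nondecreasing enumeration with
multiplicity of the hypotenuses of primitive Pythagorean triples, i.e. `z` is monotone
nondecreasing on `{N ≥ 1}` and `|{N ≥ 1 : z N ≤ M}| = C M` for every `M`, then
`lim_{N→∞} z(N)/N = 2π`. -/
theorem lehmer_hypotenuse_asymptotic (z : ℕ → ℕ)
    (hmono : ∀ N M : ℕ, 1 ≤ N → N ≤ M → z N ≤ z M)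
    (hcount : ∀ M : ℕ, {N : ℕ | 1 ≤ N ∧ z N ≤ M}.ncard = pptCount M) :
    Tendsto (fun N : ℕ => (z N : ℝ) / N) atTop (nhds (2 * Real.pi)) := by
  have hz : MonotoneOn z (Set.Ici 1) := fun N hN M _ hNM => hmono N M hN hNM
  have hC := tendsto_pptCount_div
  simp only [← hcount] at hC
  simpa only [inv_inv] using
    tendsto_div_of_tendsto_ncard_setOf_le_div hz (inv_ne_zero Real.two_pi_pos.ne') hC
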